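/- For all natural numbers m and all k ≥ 2, the set {α ∈ OT0 : α < Ω and H_α(k) ≤ m} is finite. -/

import Mathlib

set_option maxHeartbeats 1000000

attribute [local instance] Classical.propDecidable

/-- Raw terms of the system `T`: `0`, `1`, `ψᵢ a` and (right-nested) sums `a + b`. -/
inductive Tm : Type where
  | zero : Tm
  | one  : Tm
  | psi  : ℕ → Tm → Tm
  | add  : Tm → Tm → Tm
deriving DecidableEq

instance : Nonempty Tm := ⟨Tm.zero⟩

/-- Head (first summand) of a term. -/
def Tm.hd : Tm → Tm
  | .add a _ => a
  | t => t

/-- Tail (remaining summands) of a term. -/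
def Tm.tl : Tm → Tm
  | .add _ b => b
  | _ => .zero

/-- Whether a term is a genuine sum. -/
def Tm.isAdd : Tm → Prop
  | .add _ _ => True
  | _ => False

/-- The comparison relation `<` on terms of `T`. -/
inductive TLt : Tm → Tm → Prop where
  | zero_lt {a : Tm} : a ≠ Tm.zero → TLt Tm.zero a
  | one_lt_psi0 {a : Tm} : TLt Tm.one (Tm.psi 0 a)
  | psi_mono {i : ℕ} {a b : Tm} : TLt a b → TLt (Tm.psi i a) (Tm.psi i b)
  | psi_lt {i j : ℕ} {a b : Tm} : i < j → TLt (Tm.psi i a) (Tm.psi j b)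
  | lex_hd {a b : Tm} : (Tm.isAdd a ∨ Tm.isAdd b) → TLt (Tm.hd a) (Tm.hd b) → TLt a b
  | lex_tl {a b : Tm} : (Tm.isAdd a ∨ Tm.isAdd b) → Tm.hd a = Tm.hd b →
      TLt (Tm.tl a) (Tm.tl b) → TLt a b

/-- `≤` on terms. -/
def TLe (a b : Tm) : Prop := TLt a b ∨ a = b

/-- Addition of terms: summands of the left argument smaller than the head of the
right argument are discarded. -/
noncomputable def Tm.addT : Tm → Tm → Tm
  | .zero, b => b
  | a, .zero => a
  | .add p r, b => if TLt p (Tm.hd b) then b else Tm.add p (Tm.addT r b)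
  | a, b => if TLt a (Tm.hd b) then b else Tm.add a b

/-- The term representing a natural number. -/
def natToTm : ℕ → Tm
  | 0 => .zero
  | 1 => .one
  | n + 2 => Tm.add Tm.one (natToTm (n + 1))

/-- The natural number represented by a (numeral) term. -/
def tmToNat : Tm → ℕ
  | .zero => 0
  | .one => 1
  | .psi _ _ => 0
  | .add a b => tmToNat a + tmToNat b

/-- Multiplication of a (principal) term by a natural number. -/
noncomputable def mulNat (a : Tm) : ℕ → Tm
  | 0 => .zero
  | n + 1 => Tm.addT (mulNat a n) a

/-- Principal terms: `1` and the `ψᵢ`-terms. -/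
def Tm.IsPrincipal : Tm → Prop
  | .one => True
  | .psi _ _ => True
  | _ => False

/-- The well-formed terms of the system `T`. -/
inductive InT : Tm → Prop where
  | zero : InT .zero
  | one : InT .one
  | psi {i : ℕ} {a : Tm} : i < 3 → InT a → InT (.psi i a)
  | add {a b : Tm} : Tm.IsPrincipal a → InT a → InT b → b ≠ .zero →
      TLe (Tm.hd b) a → InT (.add a b)

/-- `ω := ψ₀0`. -/
def omegaT : Tm := .psi 0 .zero
/-- `Ω := ψ₁0`. -/
def OmegaT : Tm := .psi 1 .zero
/-- `Ω₂ := ψ₂0`. -/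
def Omega2T : Tm := .psi 2 .zero

/-- The type `tp(α)` of a term. -/
def tp : Tm → Tm
  | .zero => .zero
  | .one => .one
  | .add _ b => tp b
  | .psi i a =>
    if tp a = Tm.zero then Tm.psi i Tm.zero
    else if tp a = Tm.one then omegaT
    else if (i = 0 ∧ tp a = OmegaT) ∨ (i = 1 ∧ tp a = Omega2T) then omegaT
    else tp a

/-- The fundamental sequence `α[x]` of a term `α` at index `x`. -/
noncomputable def fund : Tm → Tm → Tm
  | .zero, _ => .zero
  | .one, _ => .zero
  | .add a b, x => Tm.addT a (fund b x)
  | .psi i a, x =>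
    if tp a = Tm.zero then x
    else if tp a = Tm.one then mulNat (Tm.psi i (fund a Tm.zero)) (tmToNat x)
    else if i = 0 ∧ tp a = OmegaT then
      Tm.psi 0 (fund a (Nat.rec (motive := fun _ => Tm) Tm.zero
        (fun _ ih => Tm.psi 0 (fund a ih)) (tmToNat x)))
    else if i = 1 ∧ tp a = Omega2T then
      Tm.psi 1 (fund a (Nat.rec (motive := fun _ => Tm) Tm.zero
        (fun _ ih => Tm.psi 1 (fund a ih)) (tmToNat x)))
    else Tm.psi i (fund a x)
termination_by t _ => sizeOf t
decreasing_by all_goals simp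

/-- The finite set `G₁(α)`. -/
def G1 : Tm → Finset Tm
  | .zero => ∅
  | .one => ∅
  | .psi 0 _ => ∅
  | .psi 1 b => insert b (G1 b)
  | .psi 2 b => G1 b
  | .psi (_ + 3) _ => ∅
  | .add a b => G1 a ∪ G1 b

/-- The finite set `G₀(α)`. -/
def G0 : Tm → Finset Tm
  | .zero => ∅
  | .one => ∅
  | .psi 0 b => insert b (G0 b)
  | .psi 1 b => G0 b
  | .psi 2 b => G0 b
  | .psi (_ + 3) _ => ∅
  | .add a b => G0 a ∪ G0 b

/-- The well-founded subsystem `OT ⊆ T`. -/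
inductive InOT : Tm → Prop where
  | zero : InOT .zero
  | one : InOT .one
  | psi2 {b : Tm} : InOT b → InOT (.psi 2 b)
  | add {a b : Tm} : InT (.add a b) → InOT a → InOT b → InOT (.add a b)
  | psi1 {b : Tm} : InOT b → (∀ γ ∈ G1 b, TLt γ b) → InOT (.psi 1 b)
  | psi0 {b : Tm} : InOT b → (∀ γ ∈ G0 b, TLt γ b) → TLt b Omega2T → InOT (.psi 0 b)

/-- The norm `N(α)`. -/
def normN : Tm → ℕ
  | .zero => 0
  | .one => 1
  | .psi _ b => 1 + normN b
  | .add a b => normN a + normN b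

/-- `OT₀ := {α ∈ OT : α < ψ₁Ω₂ and G₀α < ψ₁Ω₂}`. -/
def InOT0 (a : Tm) : Prop :=
  InOT a ∧ TLt a (Tm.psi 1 Omega2T) ∧ ∀ γ ∈ G0 a, TLt γ (Tm.psi 1 Omega2T)

/-- Single-step descent: `b = a[x]` for some term `x ≤ n`. -/
def stepLe (n : ℕ) (b a : Tm) : Prop := ∃ x : Tm, TLe x (natToTm n) ∧ b = fund a x

/-- `a <ₙ b` : transitive closure of single-step descent. -/
def ltN (n : ℕ) (a b : Tm) : Prop := Relation.TransGen (stepLe n) a b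

/-- `a ≤ₙ b` : reflexive transitive closure of single-step descent. -/
def leN (n : ℕ) (a b : Tm) : Prop := Relation.ReflTransGen (stepLe n) a b

mutual
/-- Graph of the Hardy hierarchy: `HRel α k n` means `H_α(k) = n`. -/
inductive HRel : Tm → ℕ → ℕ → Prop where
  | zero {k : ℕ} : HRel Tm.zero k k
  | succ {α : Tm} {k n : ℕ} : tp α = Tm.one → HRel (fund α Tm.zero) k n →
      HRel α k (n * k)
  | lim {α β : Tm} {k n : ℕ} : tp α = omegaT → HIter α k k β → HRel β k n →
      HRel α k n

/-- Graph of the iteration `α{b}`: `HIter α k b β` means `α{b} = β`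
(where `α{0} = α[0]` and `α{b+1} = α[H_(α{b})(k)]`). -/
inductive HIter : Tm → ℕ → ℕ → Tm → Prop where
  | zero {α : Tm} {k : ℕ} : HIter α k 0 (fund α Tm.zero)
  | succ {α β : Tm} {k b n : ℕ} : HIter α k b β → HRel β k n →
      HIter α k (b + 1) (fund α (natToTm n))
end

/-- The Hardy function `H_α(k)`. -/
noncomputable def H (α : Tm) (k : ℕ) : ℕ := sInf {n | HRel α k n}

/-- The (unique, when it exists) ordinal term of the `k`-normal form of `m`:
the maximal `α ∈ OT₀ ∩ Ω` with `H_α(k) ≤ m`. -/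
noncomputable def nfAlpha (k m : ℕ) : Tm :=
  Classical.epsilon fun α =>
    InOT0 α ∧ TLt α OmegaT ∧ H α k ≤ m ∧
      ∀ β : Tm, InOT0 β → TLt β OmegaT → TLt α β → m < H β k

theorem tmToNat_le_normN (t : Tm) : tmToNat t ≤ normN t := by
  induction t with
  | zero => simp [tmToNat, normN]
  | one => simp [tmToNat, normN]
  | psi i a ih => simp [tmToNat, normN]
  | add a b iha ihb => simp only [tmToNat, normN]; omega

mutual
/-- Base change `α[k ← k+1]` on terms. -/
noncomputable def bcT (k : ℕ) : Tm → Tm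
  | .zero => .zero
  | .one => .one
  | .psi i a => .psi i (bcT k a)
  | .add a b =>
      if a = Tm.one then natToTm (bcN k (tmToNat (Tm.add a b)))
      else if h : 0 < normN a ∧ 0 < normN b then Tm.add (bcT k a) (bcT k b)
      else Tm.zero
termination_by a => 2 * normN a + 1
decreasing_by
  all_goals simp only [normN]
  · omega
  · have := tmToNat_le_normN (Tm.add a b); simp only [normN] at this ⊢; omega
  · omega
  · omega

/-- Base change `m[k ← k+1]` on natural numbers. -/
noncomputable def bcN (k m : ℕ) : ℕ :=
  if h1 : m < k then m
  else if h2 : m = k then k + 1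
  else if hg : normN (nfAlpha k m) < m ∧ 0 < H (nfAlpha k m) k ∧ H (nfAlpha k m) k ≤ m then
    H (bcT k (nfAlpha k m)) (k + 1) * (m / H (nfAlpha k m) k) + bcN k (m % H (nfAlpha k m) k)
  else 0
termination_by 2 * m
decreasing_by
  · omega
  · have := Nat.mod_lt m (y := H (nfAlpha k m) k) hg.2.1; omega
end

mutual
/-- The ordinal assignment `o_k` on terms of `OT₀`. -/
noncomputable def oT (k : ℕ) : Tm → Tm
  | .zero => .zero
  | .one => .one
  | .psi 0 b => .psi 1 (oT k b)
  | .psi 1 b => .psi 2 (oT k b)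
  | .psi (_ + 2) _ => .zero
  | .add a b =>
      if a = Tm.one then oN k (tmToNat (Tm.add a b))
      else if h : 0 < normN a ∧ 0 < normN b then Tm.addT (oT k a) (oT k b)
      else Tm.zero
termination_by a => 2 * normN a + 1
decreasing_by
  all_goals simp only [normN]
  · omega
  · omega
  · have := tmToNat_le_normN (Tm.add a b); simp only [normN] at this ⊢; omega
  · omega
  · omega

/-- The ordinal assignment `o_k` on natural numbers. -/
noncomputable def oN (k m : ℕ) : Tm :=
  if h1 : m < k then natToTm m
  else if h2 : m = k then omegaT
  else if hg : normN (nfAlpha k m) < m ∧ 0 < H (nfAlpha k m) k ∧ H (nfAlpha k m) k ≤ m then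
    Tm.addT (Tm.psi 0 (oT k (nfAlpha k m))) (oN k (m - H (nfAlpha k m) k))
  else Tm.zero
termination_by 2 * m
decreasing_by
  · omega
  · omega
end

/-- Ordinal contexts: a term with a single hole, either replacing a summand
(`ξ + ⟦·⟧ + η`) or nested under collapsing functions (`ξ + ψᵢ(μ⟦·⟧) + η`). -/
inductive Ctx : Type where
  | base : Tm → Tm → Ctx
  | psiC : Tm → ℕ → Ctx → Tm → Ctx

/-- Filling the hole of a context with a term. -/
noncomputable def Ctx.fill : Ctx → Tm → Tm
  | .base ξ η, γ => Tm.addT (Tm.addT ξ γ) η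
  | .psiC ξ i μ η, γ => Tm.addT (Tm.addT ξ (Tm.psi i (Ctx.fill μ γ))) η

/-- The truncated context `λ⁻⟦·⟧`: all summands following the hole are removed,
at every level. -/
def Ctx.trunc : Ctx → Ctx
  | .base ξ _ => .base ξ Tm.zero
  | .psiC ξ i μ _ => .psiC ξ i (Ctx.trunc μ) Tm.zero

/-- A context is valid if only `ψ₀` and `ψ₁` occur on the path to the hole. -/
def Ctx.Valid : Ctx → Prop
  | .base _ _ => True
  | .psiC _ i μ _ => i ≤ 1 ∧ Ctx.Valid μ

/-- A context is `ψ₀`-nesting free if its hole is not in the scope of a `ψ₀`. -/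
def Ctx.NestFree : Ctx → Prop
  | .base _ _ => True
  | .psiC _ i μ _ => i = 1 ∧ Ctx.NestFree μ


theorem pone : Tm.IsPrincipal .one := trivial
theorem ppsi {i : ℕ} {a : Tm} : Tm.IsPrincipal (.psi i a) := trivial

inductive DD : List ℕ → List ℕ → Prop where
  | here {x y : ℕ} {u v : List ℕ} : x < y → DD (x :: u) (y :: v)
  | there {x : ℕ} {u v : List ℕ} : DD u v → DD (x :: u) (x :: v)

theorem DD.irrefl {u : List ℕ} : ¬ DD u u := by
  induction u with
  | nil => intro h; cases h
  | cons x u ih => intro h; cases h with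
    | here h => omega
    | there h => exact ih h

theorem DD.trans {u v w : List ℕ} (h : DD u v) : DD v w → DD u w := by
  induction h generalizing w with
  | here h => intro h2; cases h2 with
    | here h2 => exact .here (by omega)
    | there h2 => exact .here h
  | there h ih => intro h2; cases h2 with
    | here h2 => exact .here h2
    | there h2 => exact .there (ih h2)

theorem DD.app {u v : List ℕ} (h : DD u v) (t t' : List ℕ) : DD (u ++ t) (v ++ t') := by
  induction h with
  | here h => exact .here h
  | there h ih => exact .there ih

theorem DD.pre {u v : List ℕ} (h : DD u v) (w : List ℕ) : DD (w ++ u) (w ++ v) := by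
  induction w with
  | nil => exact h
  | cons x w ih => exact .there ih

def sT : Tm → List ℕ
  | .zero => []
  | .one => [1]
  | .psi i a => (i + 2) :: (sT a ++ [0])
  | .add a b => sT a ++ sT b

def eT (a : Tm) : List ℕ := sT a ++ [0]

def FT (a : Tm) : ℕ := (sT a).headD 0

def wfT : Tm → Prop
  | .zero => True
  | .one => True
  | .psi _ a => wfT a
  | .add a b => Tm.IsPrincipal a ∧ wfT a ∧ wfT b

theorem wf_pos {a : Tm} (h : wfT a) (h0 : a ≠ .zero) : ∃ y l, sT a = (y + 1) :: l := by
  induction a with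
  | zero => exact absurd rfl h0
  | one => exact ⟨0, [], rfl⟩
  | psi i a ih => exact ⟨i + 1, _, rfl⟩
  | add a b iha ihb =>
    obtain ⟨hp, ha, hb⟩ := h
    obtain ⟨y, l, hy⟩ := iha ha (by rintro rfl; exact hp)
    exact ⟨y, l ++ sT b, by simp [sT, hy]⟩

theorem wf_hd {a : Tm} (h : wfT a) : wfT a.hd := by
  cases a <;> simp_all [wfT, Tm.hd]

theorem wf_tl {a : Tm} (h : wfT a) : wfT a.tl := by
  cases a <;> simp_all [wfT, Tm.tl]

theorem s_split (a : Tm) : sT a = sT a.hd ++ sT a.tl := by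
  cases a <;> simp [sT, Tm.hd, Tm.tl]

theorem e_split (a : Tm) : eT a = sT a.hd ++ eT a.tl := by
  rw [eT, s_split, eT, List.append_assoc]

theorem prin_hd {a : Tm} (h : wfT a) (h0 : a ≠ .zero) : a.hd.IsPrincipal := by
  cases a <;> simp_all [wfT, Tm.hd, Tm.IsPrincipal]

theorem prin_ne {a : Tm} (h : a.IsPrincipal) : a ≠ .zero := by
  rintro rfl; exact h

theorem zero_DD {b : Tm} (h : wfT b) (h0 : b ≠ .zero) : DD (eT .zero) (eT b) := by
  obtain ⟨y, l, hy⟩ := wf_pos h h0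
  rw [eT, eT, hy]; exact .here (by omega)

theorem TLt_DD {a b : Tm} (h : TLt a b) : wfT a → wfT b →
    DD (eT a) (eT b) ∧ (a.IsPrincipal → b.IsPrincipal → DD (sT a) (sT b)) := by
  induction h with
  | zero_lt h0 =>
    intro _ hb
    exact ⟨zero_DD hb h0, fun h => absurd h (by simp [Tm.IsPrincipal])⟩
  | one_lt_psi0 => 
    intro _ _
    exact ⟨.here (by omega), fun _ _ => .here (by omega)⟩
  | psi_mono h ih =>
    intro ha hb
    have := (ih ha hb).1
    exact ⟨.there (this.app _ _), fun _ _ => .there this⟩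
  | psi_lt h =>
    intro _ _
    exact ⟨.here (by omega), fun _ _ => .here (by omega)⟩
  | @lex_hd a b hab h ih =>
    intro ha hb
    have ih := ih (wf_hd ha) (wf_hd hb)
    refine ⟨?_, fun h1 h2 => ?_⟩
    · by_cases a0 : a = .zero
      · subst a0
        refine zero_DD hb ?_
        rintro rfl
        simp [Tm.isAdd] at hab
      · have pa := prin_hd ha a0
        by_cases b0 : b = .zero
        · subst b0
          exfalso
          obtain ⟨y, l, hy⟩ := wf_pos (wf_hd ha) (prin_ne pa)
          have := ih.1
          rw [eT, hy] at this
          cases this with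
          | here h => omega
        · rw [e_split a, e_split b]
          exact (ih.2 pa (prin_hd hb b0)).app _ _
    · cases a <;> cases b <;> simp_all [Tm.isAdd, Tm.IsPrincipal]
  | @lex_tl a b hab h h2 ih =>
    intro ha hb
    have ih := ih (wf_tl ha) (wf_tl hb)
    refine ⟨?_, fun h1 h2 => ?_⟩
    · rw [e_split a, e_split b, h]
      exact ih.1.pre _
    · cases a <;> cases b <;> simp_all [Tm.isAdd, Tm.IsPrincipal]

def Ple (p q : Tm) : Prop := p = q ∨ DD (sT p) (sT q)

theorem Ple.trans {p q r : Tm} (h : Ple p q) (h2 : Ple q r) : Ple p r := by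
  rcases h with rfl | h
  · exact h2
  · rcases h2 with rfl | h2
    · exact .inr h
    · exact .inr (h.trans h2)

theorem DD_head {u v : List ℕ} (h : DD u v) : u.headD 0 ≤ v.headD 0 := by
  cases h with
  | here h => simpa using h.le
  | there h => simp

theorem Ple.F {p q : Tm} (h : Ple p q) : FT p ≤ FT q := by
  rcases h with rfl | h
  · exact le_rfl
  · exact DD_head h

theorem FT_e (a : Tm) : (eT a).headD 0 = FT a := by
  unfold eT FT; cases sT a <;> simp

theorem FT_hd {a : Tm} (h : wfT a) : FT a.hd = FT a := by
  by_cases h0 : a = .zero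
  · subst h0; rfl
  · obtain ⟨y, l, hy⟩ := wf_pos (wf_hd h) (prin_ne (prin_hd h h0))
    rw [FT, FT, s_split a, hy]; rfl

/-- good terms: only ψ0, ψ1, decreasing sums -/
inductive VT : Tm → Prop where
  | zero : VT .zero
  | one : VT .one
  | psi {i : ℕ} {a : Tm} : i < 2 → VT a → VT (.psi i a)
  | add {a b : Tm} : Tm.IsPrincipal a → VT a → VT b → b ≠ .zero →
      Ple (Tm.hd b) a → VT (.add a b)

theorem VT.wf {a : Tm} (h : VT a) : wfT a := by
  induction h with
  | zero => trivial
  | one => trivial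
  | psi _ _ ih => exact ih
  | add h1 _ _ _ _ ih1 ih2 => exact ⟨h1, ih1, ih2⟩

theorem not_TLt {p q : Tm} (hp : wfT p) (hq : wfT q) (pp : p.IsPrincipal) (pq : q.IsPrincipal)
    (h : Ple q p) : ¬ TLt p q := by
  intro h2
  have := (TLt_DD h2 hp hq).2 pp pq
  rcases h with rfl | h
  · exact DD.irrefl this
  · exact DD.irrefl (this.trans h)

theorem addT_zero' {p : Tm} (pp : p.IsPrincipal) : Tm.addT p .zero = p := by
  cases p <;> simp_all [Tm.addT, Tm.IsPrincipal]

theorem addT_nz {p u : Tm} (pp : p.IsPrincipal) (hu : u ≠ .zero) (h : ¬ TLt p u.hd) :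
    Tm.addT p u = .add p u := by
  cases p <;> cases u <;> simp_all [Tm.addT, Tm.IsPrincipal]

theorem addT_V {p u : Tm} (pp : p.IsPrincipal) (hp : VT p) (hu : VT u) (h0 : u ≠ .zero)
    (h : Ple u.hd p) : Tm.addT p u = .add p u ∧ VT (.add p u) :=
  ⟨addT_nz pp h0 (not_TLt hp.wf (wf_hd hu.wf) pp (prin_hd hu.wf h0) h), .add pp hp hu h0 h⟩

def repT (p : Tm) : ℕ → Tm
  | 0 => .zero
  | 1 => p
  | n + 2 => .add p (repT p (n + 1))

theorem rep_ne {p : Tm} (pp : p.IsPrincipal) (n : ℕ) : repT p (n + 1) ≠ .zero := by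
  cases n with
  | zero => exact prin_ne pp
  | succ n => simp [repT]

theorem rep_hd {p : Tm} (pp : p.IsPrincipal) (n : ℕ) : (repT p (n + 1)).hd = p := by
  cases n with
  | zero => cases p <;> simp_all [repT, Tm.hd, Tm.IsPrincipal]
  | succ n => simp [repT, Tm.hd]

theorem rep_V {p : Tm} (pp : p.IsPrincipal) (hp : VT p) (n : ℕ) : VT (repT p n) := by
  match n with
  | 0 => exact .zero
  | 1 => exact hp
  | n + 2 => exact .add pp hp (rep_V pp hp (n + 1)) (rep_ne pp n) (.inl (rep_hd pp n))

theorem mulNat_rep {p : Tm} (pp : p.IsPrincipal) (hp : VT p) (n : ℕ) :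
    mulNat p n = repT p n := by
  have hpp : ¬ TLt p p := not_TLt hp.wf hp.wf pp pp (.inl rfl)
  have hhd : p.hd = p := rep_hd pp 0
  have key : ∀ n, Tm.addT (repT p n) p = repT p (n + 1) := by
    intro n
    induction n with
    | zero => simp [repT, Tm.addT]
    | succ n ih =>
      cases n with
      | zero => 
        show Tm.addT p p = .add p p
        exact addT_nz pp (prin_ne pp) (by rwa [hhd])
      | succ n =>
        show Tm.addT (.add p (repT p (n + 1))) p = .add p (repT p (n + 2))
        rw [← ih]
        cases p <;> simp_all [Tm.addT, Tm.IsPrincipal]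
  induction n with
  | zero => rfl
  | succ n ih => rw [mulNat, ih, key]

theorem nat_rep (n : ℕ) : natToTm n = repT .one n := by
  match n with
  | 0 => rfl
  | 1 => rfl
  | n + 2 => simp [natToTm, repT, nat_rep (n + 1)]

theorem nat_V (n : ℕ) : VT (natToTm n) := by
  rw [nat_rep]; exact rep_V pone .one n

theorem nat_F (n : ℕ) : FT (natToTm n) < 2 := by
  match n with
  | 0 => decide
  | 1 => decide
  | n + 2 => simp [natToTm, FT, sT]

theorem toNat_nat (n : ℕ) : tmToNat (natToTm n) = n := by
  match n with
  | 0 => rfl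
  | 1 => rfl
  | n + 2 => simp [natToTm, tmToNat, toNat_nat (n + 1)]; omega

theorem norm_rep (p : Tm) (n : ℕ) : normN (repT p n) = n * normN p := by
  match n with
  | 0 => simp [repT, normN]
  | 1 => simp [repT]
  | n + 2 => simp [repT, normN, norm_rep p (n + 1)]; ring

theorem tp_V {a : Tm} (h : VT a) :
    (tp a = .zero ∧ a = .zero) ∨ tp a = .one ∨ tp a = omegaT ∨ (tp a = OmegaT ∧ 3 ≤ FT a) ∨
      (tp a = OmegaT ∧ 3 ≤ FT a) := by
  induction h with
  | zero => simp [tp]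
  | one => simp [tp]
  | @psi i a hi ha ih =>
    have : i = 0 ∨ i = 1 := by omega
    rcases ih with ⟨h, _⟩ | h | h | h | h <;> rcases this with rfl | rfl <;>
      simp [tp, h, omegaT, OmegaT, Omega2T, FT, sT]
  | @add p b pp hp hb b0 hle ih1 ih2 =>
    have h1 : FT b ≤ FT p := by rw [← FT_hd hb.wf]; exact hle.F
    have h2 : FT (.add p b) = FT p := (FT_hd (VT.add pp hp hb b0 hle).wf).symm
    rw [h2]
    simp only [tp]
    rcases ih2 with ⟨_, h⟩ | h | h | h | h
    · exact absurd h b0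
    · exact .inr (.inl h)
    · exact .inr (.inr (.inl h))
    · exact .inr (.inr (.inr (.inl ⟨h.1, h.2.trans h1⟩)))
    · exact .inr (.inr (.inr (.inl ⟨h.1, h.2.trans h1⟩)))

def GoodX (x t : Tm) : Prop :=
  (t = .zero ∨ t = .one → x = .zero) ∧ (t = omegaT → ∃ n, x = natToTm n) ∧
    (t = OmegaT → VT x ∧ FT x < 3)

theorem good_one : GoodX .zero .one := by simp [GoodX, omegaT, OmegaT]
theorem good_om (n : ℕ) : GoodX (natToTm n) omegaT := by simp [GoodX, omegaT, OmegaT]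
theorem good_Om {z : Tm} (h : VT z) (h2 : FT z < 3) : GoodX z OmegaT := by
  simp [GoodX, omegaT, OmegaT, h, h2]

theorem DD_of_F {x p : Tm} (h : FT x < FT p) : DD (eT x) (eT p) := by
  unfold FT at h; unfold eT
  revert h
  cases sT x <;> cases sT p <;> simp
  · intro h; exact .here h
  · intro h; exact .here h

theorem DDs_of_F {x p : Tm} (hx : sT x ≠ []) (h : FT x < FT p) : DD (sT x) (sT p) := by
  unfold FT at h
  revert h hx
  cases sT x <;> cases sT p <;> simp
  intro h; exact .here h

theorem small_lt {x : Tm} {i : ℕ} {a : Tm} (hx : VT x) (h : FT x < i + 2) :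
    DD (eT x) (eT (.psi i a)) ∧ (x = .zero ∨ Ple x.hd (.psi i a)) := by
  refine ⟨DD_of_F h, ?_⟩
  by_cases h0 : x = .zero
  · exact .inl h0
  · refine .inr (.inr (DDs_of_F ?_ ?_))
    · obtain ⟨y, l, hy⟩ := wf_pos (wf_hd hx.wf) (prin_ne (prin_hd hx.wf h0))
      simp [hy]
    · rw [FT_hd hx.wf]; exact h

def FundOK (a x : Tm) : Prop :=
  VT (fund a x) ∧ (a ≠ .zero → DD (eT (fund a x)) (eT a)) ∧
    (fund a x = .zero ∨ Ple (fund a x).hd a.hd)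

theorem psi_ok {i : ℕ} {a b : Tm} (hi : i < 2) (hb : VT b) (h : DD (eT b) (eT a)) :
    VT (.psi i b) ∧ DD (eT (.psi i b)) (eT (.psi i a)) ∧ Ple (.psi i b) (.psi i a) :=
  ⟨.psi hi hb, .there (h.app _ _), .inr (.there h)⟩

theorem iter_ok {a : Tm} (ha : ∀ x, VT x → FT x < 3 → VT (fund a x)) (n : ℕ) :
    VT (Nat.rec (motive := fun _ => Tm) Tm.zero (fun _ ih => Tm.psi 0 (fund a ih)) n) ∧
    FT (Nat.rec (motive := fun _ => Tm) Tm.zero (fun _ ih => Tm.psi 0 (fund a ih)) n) < 3 := by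
  induction n with
  | zero => exact ⟨.zero, by simp [FT, sT]⟩
  | succ n ih => exact ⟨.psi (by omega) (ha _ ih.1 ih.2), by simp [FT, sT]⟩

theorem fund_ok {a : Tm} (h : VT a) : ∀ x, GoodX x (tp a) → FundOK a x := by
  induction h with
  | zero => intro x _; simp [FundOK, fund, VT.zero]
  | one => intro x _; simp [FundOK, fund, VT.zero]; exact .here (by omega)
  | @psi i a hi ha ih =>
    intro x hx
    rcases tp_V ha with ⟨h, rfl⟩ | h | h | ⟨h, -⟩ | ⟨h, -⟩
    · have hf : fund (.psi i .zero) x = x := by simp [fund, tp]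
      have : VT x ∧ FT x < i + 2 := by
        have : i = 0 ∨ i = 1 := by omega
        rcases this with rfl | rfl
        · obtain ⟨n, rfl⟩ := hx.2.1 (by simp [tp, omegaT])
          exact ⟨nat_V n, nat_F n⟩
        · exact hx.2.2 (by simp [tp, OmegaT])
      unfold FundOK
      rw [hf]
      exact ⟨this.1, fun _ => (small_lt this.1 this.2).1, (small_lt this.1 this.2).2⟩
    · have hf : fund (.psi i a) x = mulNat (Tm.psi i (fund a Tm.zero)) (tmToNat x) := by
        simp [fund, h]
      obtain ⟨v, d, -⟩ := ih .zero (h ▸ good_one)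
      have hpk := psi_ok hi v (d (by rintro rfl; simp [tp] at h))
      rw [mulNat_rep ppsi hpk.1] at hf
      unfold FundOK
      rw [hf]
      refine ⟨rep_V ppsi hpk.1 _, fun _ => ?_, ?_⟩
      · cases tmToNat x with
        | zero => exact .here (by omega)
        | succ n =>
          rw [e_split, rep_hd ppsi]
          rcases hpk.2.2 with h | h
          · have := hpk.2.1
            rw [h] at this
            exact absurd this DD.irrefl
          · exact h.app _ _
      · cases tmToNat x with
        | zero => exact .inl rfl
        | succ n => rw [rep_hd ppsi]; exact .inr hpk.2.2
    · have hf : fund (.psi i a) x = .psi i (fund a x) := by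
        simp [fund, h, omegaT, OmegaT, Omega2T]
      have ht : tp (.psi i a) = omegaT := by simp [tp, h, omegaT, OmegaT, Omega2T]
      obtain ⟨v, d, -⟩ := ih x (by rw [h, ← ht]; exact hx)
      have hpk := psi_ok hi v (d (by rintro rfl; simp [tp, omegaT] at h))
      unfold FundOK
      rw [hf]
      exact ⟨hpk.1, fun _ => hpk.2.1, .inr hpk.2.2⟩
    all_goals
    · have h0 : a ≠ .zero := by rintro rfl; simp [tp, OmegaT] at h
      have : i = 0 ∨ i = 1 := by omega
      rcases this with rfl | rfl
      · have hz := iter_ok (a := a) (fun x h1 h2 => (ih x (h ▸ good_Om h1 h2)).1) (tmToNat x)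
        obtain ⟨v, d, -⟩ := ih _ (h ▸ good_Om hz.1 hz.2)
        have hpk := psi_ok hi v (d h0)
        unfold FundOK
        rw [show fund (.psi 0 a) x = .psi 0 (fund a (Nat.rec (motive := fun _ => Tm) Tm.zero
          (fun _ ih => Tm.psi 0 (fund a ih)) (tmToNat x))) by
            rw [fund]; simp [h, OmegaT]]
        exact ⟨hpk.1, fun _ => hpk.2.1, .inr hpk.2.2⟩
      · have hf : fund (.psi 1 a) x = .psi 1 (fund a x) := by
          simp [fund, h, OmegaT, Omega2T]
        have ht : tp (.psi 1 a) = OmegaT := by simp [tp, h, OmegaT, Omega2T]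
        obtain ⟨v, d, -⟩ := ih x (by rw [h, ← ht]; exact hx)
        have hpk := psi_ok hi v (d h0)
        unfold FundOK
        rw [hf]
        exact ⟨hpk.1, fun _ => hpk.2.1, .inr hpk.2.2⟩
  | @add p b pp hp hb b0 hle ih1 ih2 =>
    intro x hx
    obtain ⟨v, d, hh⟩ := ih2 x hx
    have hf : fund (.add p b) x = Tm.addT p (fund b x) := by rw [fund]
    unfold FundOK
    rw [hf]
    by_cases h0 : fund b x = .zero
    · rw [h0, addT_zero' pp]
      refine ⟨hp, fun _ => ?_, .inr (.inl ?_)⟩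
      · have := (zero_DD hb.wf b0).pre (sT p)
        rw [eT, eT] at *
        simpa [sT] using this
      · cases p <;> simp_all [Tm.hd, Tm.IsPrincipal]
    · rcases hh with hh | hh
      · exact absurd hh h0
      obtain ⟨h1, h2⟩ := addT_V pp hp v h0 (hh.trans hle)
      rw [h1]
      refine ⟨h2, fun _ => ?_, .inr (.inl rfl)⟩
      have := (d b0).pre (sT p)
      rw [eT, eT] at *
      simpa [sT] using this

theorem fund_add {p b x : Tm} (h : VT (.add p b)) (hx : GoodX x (tp b)) :
    (fund b x = .zero ∧ fund (.add p b) x = p) ∨ fund (.add p b) x = .add p (fund b x) := by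
  cases h with
  | add pp hp hb b0 hle =>
    obtain ⟨v, d, hh⟩ := fund_ok hb x hx
    have hf : fund (.add p b) x = Tm.addT p (fund b x) := by rw [fund]
    rw [hf]
    by_cases h0 : fund b x = .zero
    · rw [h0, addT_zero' pp]; exact .inl ⟨rfl, rfl⟩
    · rcases hh with hh | hh
      · exact absurd hh h0
      exact .inr (addT_V pp hp v h0 (hh.trans hle)).1

theorem fund_F {a x : Tm} (h : VT a) (hx : GoodX x (tp a)) : FT (fund a x) ≤ FT a := by
  obtain ⟨v, -, hh⟩ := fund_ok h x hx
  rcases hh with hh | hh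
  · rw [hh]; simp [FT, sT]
  · rw [← FT_hd v.wf, ← FT_hd h.wf]; exact hh.F

theorem norm_pos {a : Tm} (h : VT a) (h0 : a ≠ .zero) : 1 ≤ normN a := by
  cases h with
  | zero => exact absurd rfl h0
  | one => simp [normN]
  | psi _ _ => simp [normN]
  | @add p b pp hp hb _ _ =>
    cases p <;> simp_all [normN, Tm.IsPrincipal] <;> omega

theorem norm_fund {a : Tm} (h : VT a) :
    (tp a = .one → normN (fund a .zero) + 1 = normN a) ∧
    (tp a = omegaT → ∀ n, 2 ≤ n → normN a ≤ normN (fund a (natToTm n))) ∧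
    (tp a = OmegaT → ∀ x, VT x → FT x < 3 → 1 ≤ normN x → normN a ≤ normN (fund a x)) := by
  induction h with
  | zero => simp [tp, omegaT, OmegaT]
  | one => simp [tp, omegaT, OmegaT, fund, normN]
  | @psi i a hi ha ih =>
    obtain ⟨ih1, ih2, ih3⟩ := ih
    have i01 : i = 0 ∨ i = 1 := by omega
    rcases tp_V ha with ⟨h, rfl⟩ | h | h | ⟨h, -⟩ | ⟨h, -⟩
    · have hf : ∀ x, fund (.psi i .zero) x = x := by intro x; simp [fund, tp]
      refine ⟨by simp [tp], fun _ n hn => ?_, fun _ x _ _ hx => ?_⟩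
      · rw [hf, nat_rep, norm_rep]; simp [normN]; omega
      · rw [hf]; simpa [normN] using hx
    · have hf : ∀ n, fund (.psi i a) (natToTm n) = mulNat (Tm.psi i (fund a Tm.zero)) n := by
        intro n; simp [fund, h, toNat_nat]
      have ht : tp (.psi i a) = omegaT := by simp [tp, h]
      obtain ⟨v, -, -⟩ := fund_ok ha .zero (h ▸ good_one)
      rw [ht]
      refine ⟨by simp [omegaT], fun _ n hn => ?_, by simp [omegaT, OmegaT]⟩
      rw [hf, mulNat_rep ppsi (.psi hi v), norm_rep]
      have := ih1 h
      simp only [normN]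
      nlinarith
    · have hf : ∀ x, fund (.psi i a) x = .psi i (fund a x) := by
        intro x; simp [fund, h, omegaT, OmegaT, Omega2T]
      have ht : tp (.psi i a) = omegaT := by simp [tp, h, omegaT, OmegaT, Omega2T]
      rw [ht]
      refine ⟨by simp [omegaT], fun _ n hn => ?_, by simp [omegaT, OmegaT]⟩
      have := ih2 h n hn
      rw [hf]; simp only [normN]; omega
    all_goals
    · rcases i01 with rfl | rfl
      · have ht : tp (.psi 0 a) = omegaT := by simp [tp, h, omegaT, OmegaT]
        rw [ht]
        refine ⟨by simp [omegaT], fun _ n hn => ?_, by simp [omegaT, OmegaT]⟩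
        have hz := iter_ok (a := a) (fun x h1 h2 => (fund_ok ha x (h ▸ good_Om h1 h2)).1) n
        rw [show fund (.psi 0 a) (natToTm n) = .psi 0 (fund a (Nat.rec (motive := fun _ => Tm)
          Tm.zero (fun _ ih => Tm.psi 0 (fund a ih)) n)) by
            rw [fund]; simp [h, OmegaT, toNat_nat]]
        have := ih3 h _ hz.1 hz.2 (by
          obtain ⟨m, rfl⟩ : ∃ m, n = m + 1 := ⟨n - 1, by omega⟩
          simp [normN])
        simp only [normN]; omega
      · have hf : ∀ x, fund (.psi 1 a) x = .psi 1 (fund a x) := by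
          intro x; simp [fund, h, OmegaT, Omega2T]
        have ht : tp (.psi 1 a) = OmegaT := by simp [tp, h, OmegaT, Omega2T]
        rw [ht]
        refine ⟨by simp [OmegaT], by simp [omegaT, OmegaT], fun _ x hx1 hx2 hx3 => ?_⟩
        have := ih3 h x hx1 hx2 hx3
        rw [hf]; simp only [normN]; omega
  | @add p b pp hp hb b0 hle ih1 ih2 =>
    obtain ⟨ih1, ih2, ih3⟩ := ih2
    have hV := VT.add pp hp hb b0 hle
    have key : ∀ x, GoodX x (tp b) → normN (fund (.add p b) x) = normN p + normN (fund b x) := by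
      intro x hx
      rcases fund_add hV hx with ⟨h1, h2⟩ | h
      · rw [h1, h2]; simp [normN]
      · rw [h]; rfl
    have ht : tp (.add p b) = tp b := by rw [tp]
    rw [ht]
    refine ⟨fun h => ?_, fun h n hn => ?_, fun h x h1 h2 h3 => ?_⟩
    · rw [key _ (h ▸ good_one)]; have := ih1 h; simp only [normN]; omega
    · rw [key _ (h ▸ good_om n)]; have := ih2 h n hn; simp only [normN]; omega
    · rw [key _ (h ▸ good_Om h1 h2)]; have := ih3 h x h1 h2 h3; simp only [normN]; omega

/-- accessibility -/
inductive W0 : Tm → Prop where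
  | zero : W0 .zero
  | suc {a : Tm} : tp a = .one → W0 (fund a .zero) → W0 a
  | lim {a : Tm} : tp a = omegaT → (∀ n, W0 (fund a (natToTm n))) → W0 a

inductive W1 : Tm → Prop where
  | zero : W1 .zero
  | suc {a : Tm} : tp a = .one → W1 (fund a .zero) → W1 a
  | lim {a : Tm} : tp a = omegaT → (∀ n, W1 (fund a (natToTm n))) → W1 a
  | big {a : Tm} : tp a = OmegaT →
      (∀ z, VT z → FT z < 3 → W0 z → W1 (fund a z)) → W1 a

theorem W0.toW1 {a : Tm} (h : W0 a) : W1 a := by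
  induction h with
  | zero => exact .zero
  | suc h _ ih => exact .suc h ih
  | lim h _ ih => exact .lim h ih

theorem add_V_fund {p b x : Tm} (h : VT (.add p b)) (hx : GoodX x (tp b)) :
    fund (.add p b) x = p ∨ (fund (.add p b) x = .add p (fund b x) ∧ VT (.add p (fund b x))) := by
  rcases fund_add h hx with h1 | h1
  · exact .inl h1.2
  · exact .inr ⟨h1, h1 ▸ (fund_ok h x hx).1⟩

theorem W0.add {p b : Tm} (hp : W0 p) (h : W0 b) : VT (.add p b) → W0 (.add p b) := by
  induction h with
  | zero => intro h; cases h with | add _ _ _ h0 _ => exact absurd rfl h0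
  | @suc b h _ ih =>
    intro hv
    refine .suc h ?_
    rcases add_V_fund hv (h ▸ good_one) with h1 | ⟨h1, h2⟩
    · rw [h1]; exact hp
    · rw [h1]; exact ih h2
  | @lim b h _ ih =>
    intro hv
    refine .lim h fun n => ?_
    rcases add_V_fund hv (h ▸ good_om n) with h1 | ⟨h1, h2⟩
    · rw [h1]; exact hp
    · rw [h1]; exact ih n h2

theorem W1.add {p b : Tm} (hp : W1 p) (h : W1 b) : VT (.add p b) → W1 (.add p b) := by
  induction h with
  | zero => intro h; cases h with | add _ _ _ h0 _ => exact absurd rfl h0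
  | @suc b h _ ih =>
    intro hv
    refine .suc h ?_
    rcases add_V_fund hv (h ▸ good_one) with h1 | ⟨h1, h2⟩
    · rw [h1]; exact hp
    · rw [h1]; exact ih h2
  | @lim b h _ ih =>
    intro hv
    refine .lim h fun n => ?_
    rcases add_V_fund hv (h ▸ good_om n) with h1 | ⟨h1, h2⟩
    · rw [h1]; exact hp
    · rw [h1]; exact ih n h2
  | @big b h _ ih =>
    intro hv
    refine .big h fun z z1 z2 z3 => ?_
    rcases add_V_fund hv (h ▸ good_Om z1 z2) with h1 | ⟨h1, h2⟩
    · rw [h1]; exact hp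
    · rw [h1]; exact ih z z1 z2 z3 h2

theorem W0.rep {p : Tm} (pp : p.IsPrincipal) (hv : VT p) (hp : W0 p) (n : ℕ) :
    W0 (repT p n) := by
  match n with
  | 0 => exact .zero
  | 1 => exact hp
  | n + 2 => exact W0.add hp (W0.rep pp hv hp (n + 1)) (rep_V pp hv (n + 2))

theorem W1.rep {p : Tm} (pp : p.IsPrincipal) (hv : VT p) (hp : W1 p) (n : ℕ) :
    W1 (repT p n) := by
  match n with
  | 0 => exact .zero
  | 1 => exact hp
  | n + 2 => exact W1.add hp (W1.rep pp hv hp (n + 1)) (rep_V pp hv (n + 2))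

theorem W0.one : W0 .one := .suc rfl (by simpa [fund] using W0.zero)

theorem W0.nat (n : ℕ) : W0 (natToTm n) := by
  rw [nat_rep]; exact W0.rep pone .one W0.one n

theorem W1.psi0 {a : Tm} (h : W1 a) : VT a → W0 (.psi 0 a) := by
  induction h with
  | zero =>
    intro _
    refine .lim (by simp [tp, omegaT]) fun n => ?_
    simpa [fund, tp] using W0.nat n
  | @suc a h _ ih =>
    intro hv
    refine .lim (by simp [tp, h]) fun n => ?_
    have v := (fund_ok hv .zero (h ▸ good_one)).1
    rw [show fund (.psi 0 a) (natToTm n) = mulNat (Tm.psi 0 (fund a Tm.zero)) n by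
      simp [fund, h, toNat_nat], mulNat_rep ppsi (VT.psi (by omega) v)]
    exact W0.rep ppsi (.psi (by omega) v) (ih v) n
  | @lim a h _ ih =>
    intro hv
    refine .lim (by simp [tp, h, omegaT, OmegaT]) fun n => ?_
    rw [show fund (.psi 0 a) (natToTm n) = .psi 0 (fund a (natToTm n)) by
      simp [fund, h, omegaT, OmegaT]]
    exact ih n (fund_ok hv _ (h ▸ good_om n)).1
  | @big a h _ ih =>
    intro hv
    refine .lim (by simp [tp, h, omegaT, OmegaT]) fun n => ?_
    have hfv : ∀ x, VT x → FT x < 3 → VT (fund a x) :=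
      fun x h1 h2 => (fund_ok hv x (h ▸ good_Om h1 h2)).1
    rw [show fund (.psi 0 a) (natToTm n) = .psi 0 (fund a (Nat.rec (motive := fun _ => Tm)
          Tm.zero (fun _ ih => Tm.psi 0 (fund a ih)) n)) by
            rw [fund]; simp [h, OmegaT, toNat_nat]]
    have key : ∀ n, W0 (Nat.rec (motive := fun _ => Tm)
          Tm.zero (fun _ ih => Tm.psi 0 (fund a ih)) n) := by
      intro n
      induction n with
      | zero => exact .zero
      | succ n ihn =>
        have hz := iter_ok hfv n
        exact ih _ hz.1 hz.2 ihn (hfv _ hz.1 hz.2)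
    have hz := iter_ok hfv n
    exact ih _ hz.1 hz.2 (key n) (hfv _ hz.1 hz.2)

theorem W1.psi1 {a : Tm} (h : W1 a) : VT a → W1 (.psi 1 a) := by
  induction h with
  | zero =>
    intro _
    refine .big (by simp [tp, OmegaT]) fun z _ _ hz => ?_
    simpa [fund, tp] using hz.toW1
  | @suc a h _ ih =>
    intro hv
    refine .lim (by simp [tp, h]) fun n => ?_
    have v := (fund_ok hv .zero (h ▸ good_one)).1
    rw [show fund (.psi 1 a) (natToTm n) = mulNat (Tm.psi 1 (fund a Tm.zero)) n by
      simp [fund, h, toNat_nat], mulNat_rep ppsi (VT.psi (by omega) v)]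
    exact W1.rep ppsi (.psi (by omega) v) (ih v) n
  | @lim a h _ ih =>
    intro hv
    refine .lim (by simp [tp, h, omegaT, Omega2T]) fun n => ?_
    rw [show fund (.psi 1 a) (natToTm n) = .psi 1 (fund a (natToTm n)) by
      simp [fund, h, omegaT, Omega2T]]
    exact ih n (fund_ok hv _ (h ▸ good_om n)).1
  | @big a h _ ih =>
    intro hv
    refine .big (by simp [tp, h, OmegaT, Omega2T]) fun z z1 z2 z3 => ?_
    rw [show fund (.psi 1 a) z = .psi 1 (fund a z) by
      simp [fund, h, OmegaT, Omega2T]]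
    exact ih z z1 z2 z3 (fund_ok hv _ (h ▸ good_Om z1 z2)).1

theorem VT.W1 {a : Tm} (h : VT a) : W1 a := by
  induction h with
  | zero => exact .zero
  | one => exact W0.one.toW1
  | @psi i a hi ha ih =>
    have i01 : i = 0 ∨ i = 1 := by omega
    rcases i01 with rfl | rfl
    · exact (ih.psi0 ha).toW1
    · exact ih.psi1 ha
  | add pp hp hb b0 hle ih1 ih2 => exact ih1.add ih2 (.add pp hp hb b0 hle)

theorem VT.W0 {a : Tm} (h : VT a) : FT a < 3 → W0 a := by
  induction h with
  | zero => intro _; exact .zero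
  | one => intro _; exact W0.one
  | @psi i a hi ha ih =>
    intro hF
    have : i = 0 := by simp [FT, sT] at hF; omega
    subst this
    exact ha.W1.psi0 ha
  | @add p b pp hp hb b0 hle ih1 ih2 =>
    intro hF
    have h2 : FT (.add p b) = FT p := (FT_hd (VT.add pp hp hb b0 hle).wf).symm
    have h1 : FT b ≤ FT p := by rw [← FT_hd hb.wf]; exact hle.F
    exact (ih1 (by omega)).add (ih2 (by omega)) (.add pp hp hb b0 hle)

theorem hardy_main (k : ℕ) (hk : 2 ≤ k) {a : Tm} (h : W0 a) : VT a →
    (∃ n, HRel a k n) ∧ ∀ n, HRel a k n → 2 ≤ n ∧ normN a ≤ n := by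
  induction h with
  | zero =>
    intro _
    refine ⟨⟨k, .zero⟩, fun n h => ?_⟩
    cases h with
    | zero => simp [normN, hk]
    | succ h _ => simp [tp] at h
    | lim h _ _ => simp [tp, omegaT] at h
  | @suc a h _ ih =>
    intro hv
    have ih := ih (fund_ok hv _ (h ▸ good_one)).1
    obtain ⟨⟨n, hn⟩, ih⟩ := ih
    refine ⟨⟨n * k, .succ h hn⟩, fun n hn => ?_⟩
    cases hn with
    | zero => simp [tp] at h
    | succ _ h2 =>
      have h3 := ih _ h2
      have h4 := (norm_fund hv).1 h
      constructor <;> nlinarith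
    | lim h2 _ _ => rw [h] at h2; simp [omegaT] at h2
  | @lim a h _ ih =>
    intro hv
    have ih := fun n => ih n (fund_ok hv _ (h ▸ good_om n)).1
    have it : ∀ b β, HIter a k b β → ∃ n, β = fund a (natToTm n) ∧ (b ≠ 0 → 2 ≤ n) := by
      intro b β hb
      induction b generalizing β with
      | zero => cases hb; exact ⟨0, rfl, by simp⟩
      | succ b ihb =>
        cases hb with
        | @succ _ β _ _ n h1 h2 =>
          obtain ⟨n', rfl, -⟩ := ihb _ h1
          exact ⟨n, rfl, fun _ => ((ih n').2 _ h2).1⟩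
    have ex : ∀ b, ∃ β, HIter a k b β := by
      intro b
      induction b with
      | zero => exact ⟨_, .zero⟩
      | succ b ihb =>
        obtain ⟨β, hβ⟩ := ihb
        obtain ⟨n', rfl, -⟩ := it _ _ hβ
        obtain ⟨n, hn⟩ := (ih n').1
        exact ⟨_, .succ hβ hn⟩
    constructor
    · obtain ⟨β, hβ⟩ := ex k
      obtain ⟨n', rfl, -⟩ := it _ _ hβ
      obtain ⟨n, hn⟩ := (ih n').1
      exact ⟨n, .lim h hβ hn⟩
    · intro n hn
      cases hn with
      | zero => simp [tp, omegaT] at h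
      | succ h2 _ => rw [h] at h2; simp [omegaT] at h2
      | lim _ h2 h3 =>
        obtain ⟨n', rfl, hn'⟩ := it _ _ h2
        have h4 := (ih n').2 _ h3
        exact ⟨h4.1, ((norm_fund hv).2.1 h n' (hn' (by omega))).trans h4.2⟩

theorem V_fin (m : ℕ) : {a : Tm | VT a ∧ normN a ≤ m}.Finite := by
  induction m with
  | zero =>
    refine (Set.finite_singleton Tm.zero).subset ?_
    rintro a ⟨h, h2⟩
    by_contra h0
    have := norm_pos h h0
    omega
  | succ m ih =>
    refine ((Set.toFinite {Tm.zero, Tm.one}).union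
      (((ih.image (Tm.psi 0)).union (ih.image (Tm.psi 1))).union
        (Set.Finite.image2 Tm.add ih ih))).subset ?_
    rintro a ⟨h, h2⟩
    cases h with
    | zero => simp
    | one => simp
    | @psi i a hi ha =>
      simp only [normN] at h2
      have hm : a ∈ {a : Tm | VT a ∧ normN a ≤ m} := ⟨ha, by omega⟩
      have i01 : i = 0 ∨ i = 1 := by omega
      rcases i01 with rfl | rfl
      · exact .inr (.inl (.inl ⟨a, hm, rfl⟩))
      · exact .inr (.inl (.inr ⟨a, hm, rfl⟩))
    | @add p b pp hp hb b0 hle =>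
      simp only [normN] at h2
      have h3 := norm_pos hp (prin_ne pp)
      have h4 := norm_pos hb b0
      exact .inr (.inr ⟨p, ⟨hp, by omega⟩, b, ⟨hb, by omega⟩, rfl⟩)

theorem InT.wf {a : Tm} (h : InT a) : wfT a := by
  induction h with
  | zero => trivial
  | one => trivial
  | psi _ _ ih => exact ih
  | add h1 _ _ _ _ ih1 ih2 => exact ⟨h1, ih1, ih2⟩

theorem InOT.wf {a : Tm} (h : InOT a) : wfT a := by
  induction h with
  | zero => trivial
  | one => trivial
  | add h _ _ _ _ => exact h.wf
  | psi2 _ ih => exact ih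
  | psi1 _ _ ih => exact ih
  | psi0 _ _ _ ih => exact ih

theorem G0_wf {a : Tm} (h : InOT a) : ∀ γ ∈ G0 a, wfT γ := by
  induction h with
  | zero => simp [G0]
  | one => simp [G0]
  | add h _ _ ih1 ih2 => simp only [G0, Finset.mem_union]; grind
  | psi2 _ ih => simpa [G0] using ih
  | psi1 _ _ ih => simpa [G0] using ih
  | psi0 h _ _ ih => simp only [G0, Finset.mem_insert]; have := h.wf; grind

theorem G1_wf {a : Tm} (h : InOT a) : ∀ γ ∈ G1 a, wfT γ := by
  induction h with
  | zero => simp [G1]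
  | one => simp [G1]
  | add h _ _ ih1 ih2 => simp only [G1, Finset.mem_union]; grind
  | psi2 _ ih => simpa [G1] using ih
  | psi0 _ _ _ ih => simp [G1]
  | psi1 h _ ih => simp only [G1, Finset.mem_insert]; have := h.wf; grind

def cP : Tm → Prop
  | .psi 0 _ => True
  | .psi 1 c => FT c < 4
  | .psi (_ + 2) _ => False
  | _ => True

theorem DD_zeros {u : List ℕ} {n : ℕ} : ¬ DD u (List.replicate n 0) := by
  induction n generalizing u with
  | zero => intro h; cases h
  | succ n ih =>
    rw [List.replicate_succ]
    intro h
    cases h with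
    | here h => omega
    | there h => exact ih h

theorem F_lt4 {c : Tm} {t : List ℕ} (h : DD (eT c ++ t) [4, 0, 0, 0]) : FT c < 4 := by
  have h1 := FT_e c
  cases hc : eT c with
  | nil => simp [eT] at hc
  | cons x l =>
    rw [hc] at h h1
    simp at h1
    cases h with
    | here h => omega
    | there h => exact absurd h (DD_zeros (n := 3))

theorem TLt_F {a b : Tm} (ha : wfT a) (hb : wfT b) (h : TLt a b) : FT a ≤ FT b := by
  rw [← FT_e, ← FT_e]; exact DD_head (TLt_DD h ha hb).1

theorem cP_of {b : Tm} (hb : wfT b) (h : TLt b (.psi 1 Omega2T)) : cP b.hd := by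
  have hd := (TLt_DD h hb (by simp [wfT, Omega2T])).1
  have hF := TLt_F hb (by simp [wfT, Omega2T]) h
  rw [← FT_hd hb] at hF
  rw [e_split] at hd
  revert hd hF
  cases b.hd with
  | zero => simp [cP]
  | one => simp [cP]
  | add _ _ => simp [cP]
  | psi i c =>
    intro hd hF
    match i with
    | 0 => simp [cP]
    | 1 =>
      simp only [cP]
      cases hd with
      | here h => omega
      | there h => exact F_lt4 (t := eT b.tl) h
    | i + 2 => simp [FT, sT] at hF

theorem cP_Ple {q p : Tm} (h : Ple q p) (hp : p.IsPrincipal) (c : cP p) : cP q := by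
  have hF := h.F
  rcases h with rfl | h
  · exact c
  cases q with
  | zero => simp [cP]
  | one => simp [cP]
  | add _ _ => simp [cP]
  | psi j d =>
    cases p with
    | zero => exact hp.elim
    | add _ _ => exact hp.elim
    | one => simp [FT, sT] at hF
    | psi i e =>
      simp [FT, sT] at hF
      match i, j with
      | 0, 0 => trivial
      | 1, 0 => trivial
      | 1, 1 =>
        cases h with
        | here h => omega
        | there h =>
          have := DD_head h
          have h1 := FT_e d
          have h2 := FT_e e
          simp only [cP] at c ⊢
          unfold eT at h1 h2
          omega
      | 0, j + 1 => omega
      | 1, j + 2 => omega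
      | i + 2, j => exact c.elim

theorem TLe_Ple {p q : Tm} (hp : wfT p) (hq : wfT q) (pp : p.IsPrincipal) (pq : q.IsPrincipal)
    (h : TLe p q) : Ple p q := by
  rcases h with h | h
  · exact .inr ((TLt_DD h hp hq).2 pp pq)
  · exact .inl h

theorem add_facts {p r : Tm} (h : InT (.add p r)) :
    p.IsPrincipal ∧ wfT p ∧ wfT r ∧ r ≠ .zero ∧ Ple r.hd p := by
  cases h with
  | add pp hp hr r0 hle =>
    exact ⟨pp, hp.wf, hr.wf, r0, TLe_Ple (wf_hd hr.wf) hp.wf (prin_hd hr.wf r0) pp hle⟩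

theorem prin_hd_self {p : Tm} (pp : p.IsPrincipal) : p.hd = p := rep_hd pp 0

theorem G1_small {b : Tm} (h : InOT b) : cP b.hd → ∀ γ ∈ G1 b, FT γ < 4 := by
  induction h with
  | zero => simp [G1]
  | one => simp [G1]
  | psi2 _ ih => intro h; exact h.elim
  | psi0 _ _ _ _ => simp [G1]
  | @psi1 b hb hG ih =>
    intro h γ hγ
    simp only [G1, Finset.mem_insert] at hγ
    have h4 : FT b < 4 := h
    rcases hγ with rfl | hγ
    · exact h4
    · exact lt_of_le_of_lt (TLt_F (G1_wf hb _ hγ) hb.wf (hG _ hγ)) h4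
  | @add p r hT hp hr ih1 ih2 =>
    intro h γ hγ
    obtain ⟨pp, -, -, r0, hle⟩ := add_facts hT
    simp only [G1, Finset.mem_union] at hγ
    rcases hγ with hγ | hγ
    · exact ih1 (by rw [prin_hd_self pp]; exact h) γ hγ
    · exact ih2 (cP_Ple hle pp h) γ hγ

theorem InOT.toV {a : Tm} (h : InOT a) : (∀ γ ∈ G0 a, TLt γ (.psi 1 Omega2T)) →
    (∀ γ ∈ G1 a, FT γ < 4) → FT a < 4 → VT a := by
  induction h with
  | zero => intros; exact .zero
  | one => intros; exact .one
  | psi2 _ _ => intro _ _ h; simp [FT, sT] at h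
  | @psi1 b hb _ ih =>
    intro h0 h1 _
    simp only [G1, Finset.mem_insert] at h1
    exact .psi (by omega) (ih h0 (fun γ h => h1 γ (.inr h)) (h1 b (.inl rfl)))
  | @psi0 b hb _ _ ih =>
    intro h0 _ _
    simp only [G0, Finset.mem_insert] at h0
    have hb1 := h0 b (.inl rfl)
    have hF := TLt_F hb.wf (by simp [wfT, Omega2T]) hb1
    have : FT (.psi 1 Omega2T) = 3 := rfl
    exact .psi (by omega) (ih (fun γ h => h0 γ (.inr h)) (G1_small hb (cP_of hb.wf hb1)) (by omega))
  | @add p r hT hp hr ih1 ih2 =>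
    intro h0 h1 hF
    obtain ⟨pp, wp, wr, r0, hle⟩ := add_facts hT
    simp only [G0, G1, Finset.mem_union] at h0 h1
    have h2 : FT (.add p r) = FT p := (FT_hd hT.wf).symm
    have h3 : FT r ≤ FT p := by rw [← FT_hd wr]; exact hle.F
    exact .add pp (ih1 (fun γ h => h0 γ (.inl h)) (fun γ h => h1 γ (.inl h)) (by omega))
      (ih2 (fun γ h => h0 γ (.inr h)) (fun γ h => h1 γ (.inr h)) (by omega)) r0 hle

theorem OT0_V {a : Tm} (h : InOT0 a) : VT a := by
  obtain ⟨h1, h2, h3⟩ := h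
  have hF := TLt_F h1.wf (by simp [wfT, Omega2T]) h2
  have : FT (.psi 1 Omega2T) = 3 := rfl
  exact h1.toV h3 (G1_small h1 (cP_of h1.wf h2)) (by omega)

theorem F_lt3 {a : Tm} (ha : wfT a) (h : TLt a OmegaT) : FT a < 3 := by
  have h1 := FT_e a
  have h := (TLt_DD h ha (by simp [wfT, OmegaT])).1
  cases hc : eT a with
  | nil => simp [eT] at hc
  | cons x l =>
    rw [hc] at h h1
    simp at h1
    cases h with
    | here h => omega
    | there h => exact absurd h (DD_zeros (n := 2))

/-- For each `m` and `k ≥ 2` there are only finitely many `α ∈ OT₀ ∩ Ω` with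
`H_α(k) ≤ m`. -/
theorem hardy_fibers_finite (m k : ℕ) (hk : 2 ≤ k) :
    {a : Tm | InOT0 a ∧ TLt a OmegaT ∧ H a k ≤ m}.Finite := by
  refine (V_fin m).subset ?_
  rintro a ⟨h0, h1, h2⟩
  have hv := OT0_V h0
  have hm := hardy_main k hk (hv.W0 (F_lt3 hv.wf h1)) hv
  have hne : {n | HRel a k n}.Nonempty := hm.1
  have := hm.2 _ (Nat.sInf_mem hne)
  exact ⟨hv, this.2.trans h2⟩
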